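/- arXiv:1806.10539 — 3 statements merged into one kernel-verified Lean document; each statement's English description precedes it below -/
import Mathlib

section
/- Fix E₀ > 0, let n ∈ ℕ, and let φ : ℝ → ℝ be nonnegative, vanish on (−∞, 0), be real-analytic on [0,1], and satisfy φ^{(k)}(0) = 0 for 0 ≤ k ≤ n−1 and φ^{(n)}(0) > 0. For κ ∈ {−1/2, 1/2} define ξ_κ(V) = (4π/V) ∫_V^{E₀} φ(1 − E/E₀)(E²/V² − 1)^κ dE. Then there exists V* ∈ (0, E₀) such that for all V ∈ [V*, E₀) one has ξ_{1/2}(V)/ξ_{−1/2}(V) ≤ 101(E₀ + V)(E₀ − V) / (100(3 + 2n)V²). -/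
open MeasureTheory

/-!
With `s(E) = E² / V² - 1`, the density `g(E) = (b² - E²)ⁿ E` has moments
`M_κ = ∫_V^b g s^κ` that satisfy an exact recursion: integrating the derivative of
`(b² - E²)ⁿ⁺¹ s^(κ+1)` over `[V, b]`, where it vanishes at both ends, gives
`(n + κ + 2) M_{κ+1} = (κ + 1) s(b) M_κ`.

By Taylor's theorem `φ (1 - E / E₀)` is asymptotically equivalent to a positive multiple of `g`
(with `b = E₀`) as `E ↑ E₀`. Hence, for any `r > 1`, each is at most `r` times the other on
`[V, E₀]` once `V` is close to `E₀`, and the ratio of consecutive moments of `φ (1 - E / E₀)` is at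
most `r²` times that of `g`. The claim is the case `κ = -1/2`, `r² = 101/100`.
-/

section

open Asymptotics Filter Set Topology

lemma eventually_le_const_mul_of_isEquivalent {α : Type*} {l : Filter α} {u v : α → ℝ} {r : ℝ}
    (huv : u ~[l] v) (hv : ∀ᶠ x in l, 0 ≤ v x) (hr : 1 < r) : ∀ᶠ x in l, u x ≤ r * v x := by
  filter_upwards [huv.isLittleO.def (sub_pos.2 hr), hv] with x hx hvx
  rw [Real.norm_of_nonneg hvx, Pi.sub_apply] at hx
  linarith [(le_abs_self _).trans hx]

lemma eventually_forall_mem_Icc_nhdsLT {α : Type*} [LinearOrder α] [TopologicalSpace α]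
    [OrderTopology α] {b : α} {p : α → Prop} (hp : ∀ᶠ x in 𝓝[≤] b, p x) :
    ∀ᶠ a in 𝓝[<] b, ∀ x ∈ Icc a b, p x := by
  have hleft : Tendsto id (𝓝[<] b) (𝓝[≤] b) := nhdsWithin_mono _ Iio_subset_Iic_self
  have hright : Tendsto (fun _ => b) (𝓝[<] b) (𝓝[≤] b) :=
    tendsto_const_nhdsWithin (mem_Iic.2 le_rfl)
  exact (hleft.Icc hright).eventually (eventually_smallSets_forall.2 hp)

lemma isEquivalent_pow_smul_of_iteratedDerivWithin_eq_zero {F : Type*} [NormedAddCommGroup F]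
    [NormedSpace ℝ F] {f : ℝ → F} {s : Set ℝ} {x₀ : ℝ} {n : ℕ} (hs : Convex ℝ s) (hx₀ : x₀ ∈ s)
    (hf : ContDiffOn ℝ n f s) (hlow : ∀ k < n, iteratedDerivWithin k f s x₀ = 0)
    (hn : iteratedDerivWithin n f s x₀ ≠ 0) :
    f ~[𝓝[s] x₀] fun x =>
      (x - x₀) ^ n • ((n.factorial : ℝ)⁻¹ • iteratedDerivWithin n f s x₀) := by
  set a : F := (n.factorial : ℝ)⁻¹ • iteratedDerivWithin n f s x₀ with ha
  have ha0 : a ≠ 0 := smul_ne_zero (by positivity) hn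
  have htaylor : ∀ x, taylorWithinEval f n s x₀ x = (x - x₀) ^ n • a := by
    intro x
    rw [taylor_within_apply, Finset.sum_range_succ, Finset.sum_eq_zero, zero_add, ha, smul_smul,
      mul_comm]
    intro k hk
    rw [hlow k (Finset.mem_range.1 hk), smul_zero]
  have hbound : (fun x => (x - x₀) ^ n) =O[𝓝[s] x₀] fun x => (x - x₀) ^ n • a :=
    IsBigO.of_bound ‖a‖⁻¹ <| .of_forall fun x => by
      rw [norm_smul _ a, mul_comm, mul_inv_cancel_right₀ (norm_ne_zero_iff.2 ha0)]
  have hrem := taylor_isLittleO hs hx₀ hf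
  simp only [htaylor] at hrem
  exact hrem.trans_isBigO hbound

/-- The moment of order `κ` of an energy density `f` on `[V, b]`. The paper's `ξ_κ(V)` is `4π / V`
times this integral, for `b = E₀` and `f E = φ (1 - E / E₀)`. -/
noncomputable def momentIntegral (f : ℝ → ℝ) (b κ V : ℝ) : ℝ :=
  ∫ E in V..b, f E * (E ^ 2 / V ^ 2 - 1) ^ κ

/-- A density vanishing to order `n` at `b` to which other such densities are compared; the
factor `E` makes its consecutive moments proportional. -/
def comparisonDensity (b : ℝ) (n : ℕ) (E : ℝ) : ℝ :=
  (b ^ 2 - E ^ 2) ^ n * E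

lemma continuous_comparisonDensity (b : ℝ) (n : ℕ) : Continuous (comparisonDensity b n) := by
  unfold comparisonDensity
  fun_prop

lemma comparisonDensity_nonneg {b E : ℝ} (hE : E ∈ Icc 0 b) (n : ℕ) :
    0 ≤ comparisonDensity b n E :=
  mul_nonneg (pow_nonneg (sub_nonneg.2 (pow_le_pow_left₀ hE.1 hE.2 2)) n) hE.1

lemma comparisonDensity_isEquivalent {b : ℝ} (hb : b ≠ 0) (n : ℕ) :
    comparisonDensity b n ~[𝓝 b] fun E => ((2 * b ^ 2) ^ n * b) * (1 - E / b) ^ n := by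
  have hcofactor : (fun E : ℝ => (b * (b + E)) ^ n * E) ~[𝓝 b]
      Function.const ℝ ((2 * b ^ 2) ^ n * b) := by
    rw [isEquivalent_const_iff_tendsto (by positivity)]
    convert (Continuous.tendsto (by fun_prop) b :
      Tendsto (fun E : ℝ => (b * (b + E)) ^ n * E) (𝓝 b) _) using 3
    ring
  refine (hcofactor.mul (IsEquivalent.refl (u := fun E => (1 - E / b) ^ n))).congr_left
    (.of_forall fun E => ?_)
  have hfactor : b ^ 2 - E ^ 2 = b * (b + E) * (1 - E / b) := by field_simp; ring
  simp only [Pi.mul_apply, comparisonDensity, hfactor, mul_pow]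
  ring

section Moments

variable {f g : ℝ → ℝ} {b κ V : ℝ}

lemma sq_div_sq_sub_one_nonneg {E : ℝ} (hV : 0 < V) (hE : V ≤ E) : 0 ≤ E ^ 2 / V ^ 2 - 1 := by
  rw [sub_nonneg, one_le_div (by positivity)]
  exact pow_le_pow_left₀ hV.le hE 2

lemma intervalIntegrable_mul_sq_div_sq_sub_one_rpow (hV : 0 < V) (hVb : V ≤ b) (hκ : -1 < κ)
    (hf : ContinuousOn f (Icc V b)) :
    IntervalIntegrable (fun E => f E * (E ^ 2 / V ^ 2 - 1) ^ κ) volume V b := by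
  have hsingular : IntervalIntegrable (fun E : ℝ => (E - V) ^ κ) volume V b := by
    simpa using
      (intervalIntegral.intervalIntegrable_rpow' (a := 0) (b := b - V) hκ).comp_sub_right V
  have hregular : ContinuousOn (fun E => f E * ((E + V) / V ^ 2) ^ κ) (uIcc V b) := by
    rw [uIcc_of_le hVb]
    refine hf.mul (ContinuousOn.rpow_const (by fun_prop) fun E hE => Or.inl ?_)
    have hE0 : 0 < E := hV.trans_le hE.1
    positivity
  refine (hsingular.continuousOn_mul hregular).congr fun E hE => ?_
  rw [uIoc_of_le hVb] at hE
  have hE0 : 0 < E := hV.trans hE.1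
  have hfactor : E ^ 2 / V ^ 2 - 1 = ((E + V) / V ^ 2) * (E - V) := by field_simp; ring
  simp only [hfactor]
  rw [Real.mul_rpow (by positivity) (sub_nonneg.2 hE.1.le), mul_assoc]

lemma momentIntegral_const_mul (c : ℝ) :
    momentIntegral (fun E => c * f E) b κ V = c * momentIntegral f b κ V := by
  simp only [momentIntegral, mul_assoc, intervalIntegral.integral_const_mul]

lemma momentIntegral_le_const_mul {c : ℝ} (hV : 0 < V) (hVb : V ≤ b) (hκ : -1 < κ)
    (hf : ContinuousOn f (Icc V b)) (hg : ContinuousOn g (Icc V b))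
    (hfg : ∀ E ∈ Icc V b, f E ≤ c * g E) :
    momentIntegral f b κ V ≤ c * momentIntegral g b κ V := by
  rw [← momentIntegral_const_mul]
  exact intervalIntegral.integral_mono_on hVb
    (intervalIntegrable_mul_sq_div_sq_sub_one_rpow hV hVb hκ hf)
    (intervalIntegrable_mul_sq_div_sq_sub_one_rpow hV hVb hκ (hg.const_mul c)) fun E hE =>
      mul_le_mul_of_nonneg_right (hfg E hE)
        (Real.rpow_nonneg (sq_div_sq_sub_one_nonneg hV hE.1) κ)

lemma momentIntegral_nonneg (hV : 0 < V) (hVb : V ≤ b) (hf : ∀ E ∈ Icc V b, 0 ≤ f E) :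
    0 ≤ momentIntegral f b κ V :=
  intervalIntegral.integral_nonneg hVb fun E hE =>
    mul_nonneg (hf E hE) (Real.rpow_nonneg (sq_div_sq_sub_one_nonneg hV hE.1) κ)

lemma momentIntegral_add_one_le_of_comparable {q r : ℝ} (hV : 0 < V) (hVb : V ≤ b) (hκ : -1 < κ)
    (hf : ContinuousOn f (Icc V b)) (hg : ContinuousOn g (Icc V b)) (hq : 0 ≤ q) (hr : 0 ≤ r)
    (hfg : ∀ E ∈ Icc V b, f E ≤ r * g E) (hgf : ∀ E ∈ Icc V b, g E ≤ r * f E)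
    (hrec : momentIntegral g b (κ + 1) V = q * momentIntegral g b κ V) :
    momentIntegral f b (κ + 1) V ≤ r ^ 2 * q * momentIntegral f b κ V :=
  calc momentIntegral f b (κ + 1) V
      ≤ r * momentIntegral g b (κ + 1) V :=
        momentIntegral_le_const_mul hV hVb (by linarith) hf hg hfg
    _ = r * q * momentIntegral g b κ V := by rw [hrec, mul_assoc]
    _ ≤ r * q * (r * momentIntegral f b κ V) := by
        gcongr
        exact momentIntegral_le_const_mul hV hVb hκ hg hf hgf
    _ = r ^ 2 * q * momentIntegral f b κ V := by ring

lemma hasDerivAt_sub_sq_pow_mul_sq_div_sq_sub_one_rpow {E : ℝ} (hV : 0 < V) (hE : V < E) (n : ℕ) :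
    HasDerivAt (fun E => (b ^ 2 - E ^ 2) ^ (n + 1) * (E ^ 2 / V ^ 2 - 1) ^ (κ + 1))
      (2 * (κ + 1) * (b ^ 2 / V ^ 2 - 1) * (comparisonDensity b n E * (E ^ 2 / V ^ 2 - 1) ^ κ) -
        2 * (n + κ + 2) * (comparisonDensity b n E * (E ^ 2 / V ^ 2 - 1) ^ (κ + 1))) E := by
  have hs : 0 < E ^ 2 / V ^ 2 - 1 := by
    rw [sub_pos, one_lt_div (by positivity)]
    exact pow_lt_pow_left₀ hE hV.le two_ne_zero
  have hpow := ((hasDerivAt_pow 2 E).const_sub (b ^ 2)).fun_pow (n + 1)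
  have hrpow := (((hasDerivAt_pow 2 E).div_const (V ^ 2)).sub_const 1).rpow_const
    (p := κ + 1) (Or.inl hs.ne')
  refine (hpow.mul hrpow).congr_deriv ?_
  simp only [comparisonDensity, add_sub_cancel_right, Nat.add_sub_cancel,
    Real.rpow_add_one hs.ne']
  push_cast
  field_simp
  ring

lemma momentIntegral_comparisonDensity_add_one (hV : 0 < V) (hVb : V ≤ b) (hκ : -1 < κ) (n : ℕ) :
    momentIntegral (comparisonDensity b n) b (κ + 1) V =
      (κ + 1) / (n + κ + 2) * (b ^ 2 / V ^ 2 - 1) *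
        momentIntegral (comparisonDensity b n) b κ V := by
  have hκ1 : 0 < κ + 1 := by linarith
  have hden : 0 < n + κ + 2 := by linarith [n.cast_nonneg (α := ℝ)]
  have hcont := (continuous_comparisonDensity b n).continuousOn (s := Icc V b)
  have hint := (intervalIntegrable_mul_sq_div_sq_sub_one_rpow hV hVb hκ hcont).const_mul
    (2 * (κ + 1) * (b ^ 2 / V ^ 2 - 1))
  have hint_add_one := (intervalIntegrable_mul_sq_div_sq_sub_one_rpow (κ := κ + 1) hV hVb
    (by linarith) hcont).const_mul (2 * (n + κ + 2))
  have hprimitive : ContinuousOn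
      (fun E => (b ^ 2 - E ^ 2) ^ (n + 1) * (E ^ 2 / V ^ 2 - 1) ^ (κ + 1)) (Icc V b) :=
    ContinuousOn.mul (by fun_prop)
      (ContinuousOn.rpow_const (by fun_prop) fun _ _ => Or.inr hκ1.le)
  have hftc := intervalIntegral.integral_eq_sub_of_hasDerivAt_of_le hVb hprimitive
    (fun E hE => hasDerivAt_sub_sq_pow_mul_sq_div_sq_sub_one_rpow hV hE.1 n)
    (hint.sub hint_add_one)
  rw [intervalIntegral.integral_sub hint hint_add_one, intervalIntegral.integral_const_mul,
    intervalIntegral.integral_const_mul, div_self (by positivity : V ^ 2 ≠ 0), sub_self, sub_self,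
    Real.zero_rpow hκ1.ne', zero_pow n.succ_ne_zero, mul_zero, zero_mul, sub_self] at hftc
  unfold momentIntegral
  rw [div_mul_eq_mul_div, div_mul_eq_mul_div, eq_div_iff hden.ne']
  linarith

theorem eventually_momentIntegral_ratio_le {β c : ℝ} {n : ℕ} (hb : 0 < b) (hκ : -1 < κ)
    (hc : 1 < c) (hβ : 0 ≤ β) (hf : ContinuousOn f (Ioc 0 b))
    (hequiv : f ~[𝓝[≤] b] fun E => β * comparisonDensity b n E) :
    ∀ᶠ V in 𝓝[<] b, momentIntegral f b (κ + 1) V / momentIntegral f b κ V ≤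
      c * ((κ + 1) / (n + κ + 2) * (b ^ 2 / V ^ 2 - 1)) := by
  have hr : 1 < √c := Real.lt_sqrt_of_sq_lt (by simpa using hc)
  have hg : ∀ᶠ E in 𝓝[≤] b, 0 ≤ β * comparisonDensity b n E := by
    filter_upwards [self_mem_nhdsWithin, mem_nhdsWithin_of_mem_nhds (Ioi_mem_nhds hb)]
      with E hEb hE
    exact mul_nonneg hβ (comparisonDensity_nonneg ⟨hE.le, hEb⟩ n)
  have hf0 := hequiv.eventually_nonneg hg
  filter_upwards [eventually_forall_mem_Icc_nhdsLT hf0,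
    eventually_forall_mem_Icc_nhdsLT (eventually_le_const_mul_of_isEquivalent hequiv hg hr),
    eventually_forall_mem_Icc_nhdsLT (eventually_le_const_mul_of_isEquivalent hequiv.symm hf0 hr),
    Ioo_mem_nhdsLT hb] with V hf0V hfg hgf ⟨hV, hVb⟩
  have hq : 0 ≤ (κ + 1) / (n + κ + 2) * (b ^ 2 / V ^ 2 - 1) :=
    mul_nonneg (div_nonneg (by linarith) (by linarith [n.cast_nonneg (α := ℝ)]))
      (sq_div_sq_sub_one_nonneg hV hVb.le)
  refine div_le_of_le_mul₀ (momentIntegral_nonneg hV hVb.le hf0V) (by positivity) ?_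
  have hle := momentIntegral_add_one_le_of_comparable hV hVb.le hκ
    (hf.mono fun E hE => ⟨hV.trans_le hE.1, hE.2⟩)
    ((continuous_comparisonDensity b n).const_mul β).continuousOn hq (by positivity) hfg hgf
    (by rw [momentIntegral_const_mul, momentIntegral_const_mul,
      momentIntegral_comparisonDensity_add_one hV hVb.le hκ n, mul_left_comm])
  rwa [Real.sq_sqrt (by positivity)] at hle

end Moments

section Ansatz

variable {φ : ℝ → ℝ} {E₀ : ℝ} {n : ℕ}

lemma mapsTo_one_sub_div_Icc (hE₀ : 0 < E₀) :
    MapsTo (fun E => 1 - E / E₀) (Icc 0 E₀) (Icc 0 1) := fun _ hE =>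
  ⟨sub_nonneg.2 ((div_le_one hE₀).2 hE.2), sub_le_self _ (div_nonneg hE.1 hE₀.le)⟩

lemma tendsto_one_sub_div_nhdsLE (hE₀ : 0 < E₀) :
    Tendsto (fun E => 1 - E / E₀) (𝓝[≤] E₀) (𝓝[Icc 0 1] 0) := by
  rw [← nhdsWithin_Icc_eq_nhdsLE hE₀]
  have hcont : ContinuousWithinAt (fun E => 1 - E / E₀) (Icc 0 E₀) E₀ := by fun_prop
  simpa [div_self hE₀.ne'] using hcont.tendsto_nhdsWithin (mapsTo_one_sub_div_Icc hE₀)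

lemma exists_isEquivalent_comparisonDensity (hE₀ : 0 < E₀) (hφ : ContDiffOn ℝ n φ (Icc 0 1))
    (hder : ∀ k < n, iteratedDerivWithin k φ (Icc 0 1) 0 = 0)
    (hdern : 0 < iteratedDerivWithin n φ (Icc 0 1) 0) :
    ∃ β > 0, (fun E => φ (1 - E / E₀)) ~[𝓝[≤] E₀] fun E => β * comparisonDensity E₀ n E := by
  set a : ℝ := (n.factorial : ℝ)⁻¹ * iteratedDerivWithin n φ (Icc 0 1) 0
  set p : ℝ := (2 * E₀ ^ 2) ^ n * E₀
  have hp : 0 < p := by positivity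
  refine ⟨a / p, by positivity, ?_⟩
  have hleading : (fun E => φ (1 - E / E₀)) ~[𝓝[≤] E₀] fun E => a * (1 - E / E₀) ^ n := by
    have h := (isEquivalent_pow_smul_of_iteratedDerivWithin_eq_zero (convex_Icc 0 1)
      (left_mem_Icc.2 zero_le_one) hφ hder hdern.ne').comp_tendsto (tendsto_one_sub_div_nhdsLE hE₀)
    simpa only [Function.comp_def, sub_zero, smul_eq_mul, a, mul_comm] using h
  have hdensity : (fun E => a / p * comparisonDensity E₀ n E) ~[𝓝[≤] E₀]
      fun E => a * (1 - E / E₀) ^ n := by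
    refine ((IsEquivalent.refl (u := fun _ => a / p)).mul
      ((comparisonDensity_isEquivalent hE₀.ne' n).mono nhdsWithin_le_nhds)).congr_right
      (.of_forall fun E => ?_)
    rw [Pi.mul_apply, ← mul_assoc, div_mul_cancel₀ _ hp.ne']
  exact hleading.trans hdensity.symm

theorem stmt_5_general (hE₀ : 0 < E₀) (hφ : ContDiffOn ℝ n φ (Icc 0 1))
    (hder : ∀ k < n, iteratedDerivWithin k φ (Icc 0 1) 0 = 0)
    (hdern : 0 < iteratedDerivWithin n φ (Icc 0 1) 0) {ξ : ℝ → ℝ → ℝ}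
    (hξ : ∀ κ V, ξ κ V =
      (4 * Real.pi / V) * ∫ E in V..E₀, φ (1 - E / E₀) * (E ^ 2 / V ^ 2 - 1) ^ κ)
    {κ c : ℝ} (hκ : -1 < κ) (hc : 1 < c) :
    ∃ Vs ∈ Ioo 0 E₀, ∀ V ∈ Ico Vs E₀,
      ξ (κ + 1) V / ξ κ V ≤ c * ((κ + 1) / (n + κ + 2) * (E₀ ^ 2 / V ^ 2 - 1)) := by
  obtain ⟨β, hβ, hequiv⟩ := exists_isEquivalent_comparisonDensity hE₀ hφ hder hdern
  have hcont : ContinuousOn (fun E => φ (1 - E / E₀)) (Ioc 0 E₀) :=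
    (hφ.continuousOn.comp (by fun_prop) (mapsTo_one_sub_div_Icc hE₀)).mono Ioc_subset_Icc_self
  have hratio := eventually_momentIntegral_ratio_le hE₀ hκ hc hβ.le hcont hequiv
  obtain ⟨l, hl, hlE₀⟩ := (mem_nhdsLT_iff_exists_mem_Ico_Ioo_subset hE₀).1 hratio
  obtain ⟨Vs, hlVs, hVsE₀⟩ := exists_between hl.2
  have hVs : 0 < Vs := hl.1.trans_lt hlVs
  refine ⟨Vs, ⟨hVs, hVsE₀⟩, fun V hV => ?_⟩
  have hV0 : 0 < V := hVs.trans_le hV.1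
  rw [hξ, hξ, mul_div_mul_left _ _ (by positivity)]
  exact hlE₀ ⟨hlVs.trans_le hV.1, hV.2⟩

end Ansatz

end

/-- Second claim of Lemma 4.3: under the assumption (4.8) on the ansatz function φ,
there exists `V* ∈ (0, E₀)` with
`ξ_{1/2}(V)/ξ_{-1/2}(V) ≤ 101(E₀+V)(E₀-V)/(100(3+2n)V²)` for all `V ∈ [V*, E₀)`. -/
theorem stmt_5 (E₀ : ℝ) (hE₀ : 0 < E₀) (n : ℕ) (φ : ℝ → ℝ)
    (hnn : ∀ x, 0 ≤ φ x) (hzero : ∀ x < (0 : ℝ), φ x = 0)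
    (hanalytic : AnalyticOn ℝ φ (Set.Icc 0 1))
    (hder : ∀ k < n, iteratedDerivWithin k φ (Set.Icc (0 : ℝ) 1) 0 = 0)
    (hdern : 0 < iteratedDerivWithin n φ (Set.Icc (0 : ℝ) 1) 0)
    (ξ : ℝ → ℝ → ℝ)
    (hξ : ∀ κ V, ξ κ V =
      (4 * Real.pi / V) * ∫ E in V..E₀, φ (1 - E / E₀) * (E ^ 2 / V ^ 2 - 1) ^ κ) :
    ∃ Vs ∈ Set.Ioo (0 : ℝ) E₀, ∀ V ∈ Set.Ico Vs E₀,
      ξ (1/2) V / ξ (-1/2) V ≤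
        101 * (E₀ + V) * (E₀ - V) / (100 * (3 + 2 * (n : ℝ)) * V ^ 2) := by
  obtain ⟨Vs, hVs, hratio⟩ := stmt_5_general hE₀ (hanalytic.contDiffOn uniqueDiffOn_Icc_zero_one)
    hder hdern hξ (κ := -1/2) (c := 101/100) (by norm_num) (by norm_num)
  refine ⟨Vs, hVs, fun V hV => ?_⟩
  have hV0 : 0 < V := hVs.1.trans_le hV.1
  convert hratio V hV using 1
  · norm_num
  · rw [show (n : ℝ) + -1/2 + 2 = (3 + 2 * n) / 2 by ring]
    field_simp
    ring
end

section
/- Fix E₀ > 0 and let φ : ℝ → ℝ be continuous, bounded, and nonnegative with φ(x) = 0 for x < 0, and suppose there exists δ ∈ (0,1] with φ(x) > 0 for all x ∈ (0, δ). Define ξ_κ(V) = (4π/V) ∫_V^{E₀} φ(1 − E/E₀)(E²/V² − 1)^κ dE for κ ∈ {3/2, 1/2}, and set ρ(V) = ξ_{3/2}(V) + ξ_{1/2}(V) and p(V) = (1/3) ξ_{3/2}(V). Then both ρ and p are strictly decreasing on (0, E₀). -/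
open MeasureTheory

/-!
The integrand `φ(1 - E/E₀)(E²/V² - 1)^κ` is nonnegative and, for `κ ≥ 0`, pointwise decreasing in
`V`, while the domain `[V, E₀]` shrinks as `V` grows; so the integral is antitone in `V`. It is
positive because `φ > 0` near `0`, which corresponds to `E` near `E₀`, and the prefactor `4π/V` is
strictly decreasing. Hence every `ξ_κ` with `κ ≥ 0` is strictly decreasing, without differentiating
under the integral sign.
-/

section IntervalIntegral

variable {a b c : ℝ}

theorem intervalIntegral_pos_of_pos_on_Ioo_right {f : ℝ → ℝ} (hab : a < b) (hcb : c < b)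
    (hf : IntervalIntegrable f volume a b) (hnn : ∀ x ∈ Set.Ioc a b, 0 ≤ f x)
    (hpos : ∀ x ∈ Set.Ioo c b, 0 < f x) : 0 < ∫ x in a..b, f x := by
  have hlt : max a c < b := max_lt hab hcb
  have hsub : IntervalIntegrable f volume (max a c) b :=
    hf.mono_set (Set.uIcc_subset_uIcc_right (Set.mem_uIcc_of_le (le_max_left a c) hlt.le))
  calc
    0 < ∫ x in (max a c)..b, f x :=
      intervalIntegral.intervalIntegral_pos_of_pos_on hsub
        (fun x hx => hpos x ⟨(le_max_right a c).trans_lt hx.1, hx.2⟩) hlt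
    _ ≤ ∫ x in a..b, f x :=
      intervalIntegral.integral_mono_interval (le_max_left a c) hlt.le le_rfl
        (ae_restrict_of_forall_mem measurableSet_Ioc hnn) hf

theorem antitoneOn_intervalIntegral_left {g : ℝ → ℝ → ℝ}
    (hg : ∀ u ∈ Set.Ioo a b, ∀ v ∈ Set.Ioo a b, IntervalIntegrable (g u) volume v b)
    (hnn : ∀ u ∈ Set.Ioo a b, ∀ x ∈ Set.Ioc u b, 0 ≤ g u x)
    (hanti : ∀ x ∈ Set.Ioo a b, AntitoneOn (fun u => g u x) (Set.Ioo a x)) :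
    AntitoneOn (fun u => ∫ x in u..b, g u x) (Set.Ioo a b) := by
  intro u hu v hv huv
  calc
    ∫ x in v..b, g v x ≤ ∫ x in v..b, g u x :=
      intervalIntegral.integral_mono_on_of_le_Ioo hv.2.le (hg v hv v hv) (hg u hu v hv)
        fun x hx => hanti x ⟨hv.1.trans hx.1, hx.2⟩ ⟨hu.1, huv.trans_lt hx.1⟩ ⟨hv.1, hx.1⟩ huv
    _ ≤ ∫ x in u..b, g u x :=
      intervalIntegral.integral_mono_interval huv hv.2.le le_rfl
        (ae_restrict_of_forall_mem measurableSet_Ioc (hnn u hu)) (hg u hu u hu)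

end IntervalIntegral

section Kernel

variable {V E κ : ℝ}

theorem sq_div_sq_sub_one_pos (hV : 0 < V) (hVE : V < E) : 0 < E ^ 2 / V ^ 2 - 1 := by
  rw [sub_pos, one_lt_div (by positivity)]
  gcongr

theorem continuous_sq_div_sq_sub_one_rpow (hκ : 0 ≤ κ) (V : ℝ) :
    Continuous fun E : ℝ => (E ^ 2 / V ^ 2 - 1) ^ κ :=
  Continuous.rpow_const (by fun_prop) fun _ => Or.inr hκ

theorem antitoneOn_sq_div_sq_sub_one_rpow (hκ : 0 ≤ κ) (E : ℝ) :
    AntitoneOn (fun V : ℝ => (E ^ 2 / V ^ 2 - 1) ^ κ) (Set.Ioo 0 E) := by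
  intro U hU V hV hUV
  have hU₀ : 0 < U := hU.1
  refine Real.rpow_le_rpow (sq_div_sq_sub_one_pos hV.1 hV.2).le ?_ hκ
  gcongr

end Kernel

/-- The moment `ξ_κ(V)` of an energy distribution `w` with cut-off energy `E₀`; the isotropic ansatz
function `φ` gives `w E = φ (1 - E / E₀)`. -/
noncomputable def energyMoment (w : ℝ → ℝ) (E₀ κ V : ℝ) : ℝ :=
  (4 * Real.pi / V) * ∫ E in V..E₀, w E * (E ^ 2 / V ^ 2 - 1) ^ κ

section EnergyMoment

variable {w : ℝ → ℝ} {E₀ κ : ℝ}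

theorem antitoneOn_integral_mul_sq_div_sq_sub_one_rpow (hκ : 0 ≤ κ)
    (hw : ∀ V ∈ Set.Ioo 0 E₀, IntervalIntegrable w volume V E₀)
    (hnn : ∀ E ∈ Set.Ioc 0 E₀, 0 ≤ w E) :
    AntitoneOn (fun V => ∫ E in V..E₀, w E * (E ^ 2 / V ^ 2 - 1) ^ κ) (Set.Ioo 0 E₀) := by
  refine antitoneOn_intervalIntegral_left
    (fun U _ V hV =>
      (hw V hV).mul_continuousOn (continuous_sq_div_sq_sub_one_rpow hκ U).continuousOn)
    (fun V hV E hE => ?_) fun E hE => ?_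
  · exact mul_nonneg (hnn E ⟨hV.1.trans hE.1, hE.2⟩)
      (Real.rpow_nonneg (sq_div_sq_sub_one_pos hV.1 hE.1).le κ)
  · exact (monotone_mul_left_of_nonneg (hnn E ⟨hE.1, hE.2.le⟩)).comp_antitoneOn
      (antitoneOn_sq_div_sq_sub_one_rpow hκ E)

theorem integral_mul_sq_div_sq_sub_one_rpow_pos {V c : ℝ} (hκ : 0 ≤ κ) (hV : V ∈ Set.Ioo 0 E₀)
    (hw : IntervalIntegrable w volume V E₀) (hnn : ∀ E ∈ Set.Ioc V E₀, 0 ≤ w E)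
    (hc : c < E₀) (hpos : ∀ E ∈ Set.Ioo c E₀, 0 < w E) :
    0 < ∫ E in V..E₀, w E * (E ^ 2 / V ^ 2 - 1) ^ κ := by
  have hkernel : ∀ E, V < E → 0 < (E ^ 2 / V ^ 2 - 1) ^ κ := fun E hE =>
    Real.rpow_pos_of_pos (sq_div_sq_sub_one_pos hV.1 hE) κ
  refine intervalIntegral_pos_of_pos_on_Ioo_right hV.2 (max_lt hV.2 hc)
    (hw.mul_continuousOn (continuous_sq_div_sq_sub_one_rpow hκ V).continuousOn)
    (fun E hE => mul_nonneg (hnn E hE) (hkernel E hE.1).le) fun E hE => ?_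
  obtain ⟨hVE, hcE⟩ := max_lt_iff.1 hE.1
  exact mul_pos (hpos E ⟨hcE, hE.2⟩) (hkernel E hVE)

theorem strictAntiOn_energyMoment {c : ℝ} (hκ : 0 ≤ κ)
    (hw : ∀ V ∈ Set.Ioo 0 E₀, IntervalIntegrable w volume V E₀)
    (hnn : ∀ E ∈ Set.Ioc 0 E₀, 0 ≤ w E) (hc : c < E₀) (hpos : ∀ E ∈ Set.Ioo c E₀, 0 < w E) :
    StrictAntiOn (energyMoment w E₀ κ) (Set.Ioo 0 E₀) := by
  intro U hU V hV hUV
  have hU₀ : 0 < U := hU.1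
  have hprefactor : 4 * Real.pi / V < 4 * Real.pi / U := by gcongr
  have hintegral_le := antitoneOn_integral_mul_sq_div_sq_sub_one_rpow hκ hw hnn hU hV hUV.le
  have hintegral_pos := integral_mul_sq_div_sq_sub_one_rpow_pos hκ hV (hw V hV)
    (fun E hE => hnn E ⟨hV.1.trans hE.1, hE.2⟩) hc hpos
  exact mul_lt_mul hprefactor hintegral_le hintegral_pos (by positivity)

end EnergyMoment

section Ansatz

variable {E₀ : ℝ} {φ : ℝ → ℝ}

theorem intervalIntegrable_comp_one_sub_div {V : ℝ} (hE₀ : E₀ ≠ 0)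
    (hφ : IntervalIntegrable φ volume 0 (1 - V / E₀)) :
    IntervalIntegrable (fun E => φ (1 - E / E₀)) volume V E₀ := by
  have h := ((hφ.comp_sub_left 1).comp_mul_left (c := E₀⁻¹)).symm
  simpa [hE₀, div_eq_inv_mul] using h

theorem strictAntiOn_energyMoment_ansatz {κ δ : ℝ} (hκ : 0 ≤ κ) (hE₀ : 0 < E₀)
    (hφ : ∀ x ∈ Set.Ioo (0 : ℝ) 1, IntervalIntegrable φ volume 0 x)
    (hnn : ∀ x ∈ Set.Ico (0 : ℝ) 1, 0 ≤ φ x)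
    (hδ : 0 < δ) (hpos : ∀ x ∈ Set.Ioo 0 δ, 0 < φ x) :
    StrictAntiOn (energyMoment (fun E => φ (1 - E / E₀)) E₀ κ) (Set.Ioo 0 E₀) := by
  refine strictAntiOn_energyMoment (c := E₀ * (1 - δ)) hκ (fun V hV => ?_) (fun E hE => ?_)
    (by nlinarith) fun E hE => ?_
  · exact intervalIntegrable_comp_one_sub_div hE₀.ne'
      (hφ _ ⟨sub_pos.2 ((div_lt_one hE₀).2 hV.2), sub_lt_self 1 (div_pos hV.1 hE₀)⟩)
  · exact hnn _ ⟨sub_nonneg.2 ((div_le_one hE₀).2 hE.2), sub_lt_self 1 (div_pos hE.1 hE₀)⟩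
  · exact hpos _ ⟨sub_pos.2 ((div_lt_one hE₀).2 hE.2), sub_lt_comm.1 ((lt_div_iff₀' hE₀).2 hE.1)⟩

end Ansatz

theorem stmt_11_general {E₀ δ : ℝ} {φ : ℝ → ℝ} (hE₀ : 0 < E₀)
    (hφ : ∀ x ∈ Set.Ioo (0 : ℝ) 1, IntervalIntegrable φ volume 0 x)
    (hnn : ∀ x ∈ Set.Ico (0 : ℝ) 1, 0 ≤ φ x)
    (hδ : 0 < δ) (hpos : ∀ x ∈ Set.Ioo 0 δ, 0 < φ x)
    {ξ : ℝ → ℝ → ℝ}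
    (hξ : ∀ κ V, ξ κ V =
      (4 * Real.pi / V) * ∫ E in V..E₀, φ (1 - E / E₀) * (E ^ 2 / V ^ 2 - 1) ^ κ)
    {ρ p : ℝ → ℝ}
    (hρ : ∀ V, ρ V = ξ (3 / 2) V + ξ (1 / 2) V)
    (hp : ∀ V, p V = (1 / 3) * ξ (3 / 2) V) :
    StrictAntiOn ρ (Set.Ioo 0 E₀) ∧ StrictAntiOn p (Set.Ioo 0 E₀) := by
  have hξ_anti : ∀ κ, 0 ≤ κ → StrictAntiOn (ξ κ) (Set.Ioo 0 E₀) := fun κ hκ =>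
    (strictAntiOn_energyMoment_ansatz hκ hE₀ hφ hnn hδ hpos).congr fun V _ => (hξ κ V).symm
  have hξ_three_half := hξ_anti (3 / 2) (by norm_num)
  have hξ_half := hξ_anti (1 / 2) (by norm_num)
  rw [funext hρ, funext hp]
  exact ⟨hξ_three_half.add hξ_half,
    (strictMono_mul_left_of_pos (by norm_num)).comp_strictAntiOn hξ_three_half⟩

/-- The energy density `ρ = ξ_{3/2} + ξ_{1/2}` and pressure `p = (1/3)ξ_{3/2}` of
isotropic Vlasov matter are strictly decreasing functions of the lapse `V` on `(0, E₀)`. -/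
theorem stmt_11 (E₀ : ℝ) (hE₀ : 0 < E₀) (φ : ℝ → ℝ)
    (hcont : Continuous φ) (hbd : ∃ M, ∀ x, |φ x| ≤ M)
    (hnn : ∀ x, 0 ≤ φ x) (hzero : ∀ x < (0 : ℝ), φ x = 0)
    (δ : ℝ) (hδ : δ ∈ Set.Ioc (0 : ℝ) 1) (hpos : ∀ x ∈ Set.Ioo (0 : ℝ) δ, 0 < φ x)
    (ξ : ℝ → ℝ → ℝ)
    (hξ : ∀ κ V, ξ κ V =
      (4 * Real.pi / V) * ∫ E in V..E₀, φ (1 - E / E₀) * (E ^ 2 / V ^ 2 - 1) ^ κ)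
    (ρ p : ℝ → ℝ)
    (hρ : ∀ V, ρ V = ξ (3/2) V + ξ (1/2) V)
    (hp : ∀ V, p V = (1/3) * ξ (3/2) V) :
    StrictAntiOn ρ (Set.Ioo (0 : ℝ) E₀) ∧ StrictAntiOn p (Set.Ioo (0 : ℝ) E₀) := by
  exact stmt_11_general hE₀ (fun x _ => hcont.intervalIntegrable 0 x) (fun x _ => hnn x)
    hδ.1 hpos hξ hρ hp
end

section
/- Let K̃ > 0 and γ > 1, and consider the polytropic equation of state ρ(p) = K̃ · p^{1/γ} for p > 0. With κ(p) = ((ρ(p) + p)/(ρ(p) + 3p)) · ρ′(p) and I(p) = (1/5)κ(p)² + 2κ(p) + (ρ(p) + p)·κ′(p), one has lim_{p → 0⁺} p^{2(γ−1)/γ} · I(p) = −(5γ − 6)·K̃²/(5γ²). In particular, if γ > 6/5 then I(p) < 0 for all sufficiently small p > 0. -/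
open Filter Topology

/-!
Divide `ρ(p)`, `p ρ'(p)` and `p² ρ''(p)` by `p ^ a`, where `a = 1/γ`, and call the quotients
`u, v, w`; put `s = p / p ^ a = p ^ (1 - a)`. In these variables `s² I(p)` is a rational function
of `(u, v, w, s)`, regular at `s = 0` as long as `u ≠ 0`, where its value is `v²/5 + u w`.
As `p → 0⁺` one has `s → 0`, because `a < 1`, and `(u, v, w) → (K, a K, a (a - 1) K)`, so the limit
is `(a² / 5 + a (a - 1)) K²`. Only the limits of `u, v, w` enter, so the argument applies to every
equation of state that is polytropic to leading order.
-/

/-- The function `κ = ((ρ + p) / (ρ + 3p)) dρ/dp` of the equation of state `ρ`. -/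
noncomputable def beigSimonKappa (ρ : ℝ → ℝ) (p : ℝ) : ℝ :=
  (ρ p + p) / (ρ p + 3 * p) * deriv ρ p

/-- The Beig–Simon criterion function `I = κ² / 5 + 2κ + (ρ + p) dκ/dp` of the equation of
state `ρ`; the Beig–Simon uniqueness theorem requires `I ≤ 0`. -/
noncomputable def beigSimonCriterion (ρ : ℝ → ℝ) (p : ℝ) : ℝ :=
  (1 / 5) * beigSimonKappa ρ p ^ 2 + 2 * beigSimonKappa ρ p +
    (ρ p + p) * deriv (beigSimonKappa ρ) p

/-- An equation of state which is `K p ^ a` to leading order as `p → 0⁺`, together with its first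
two derivatives. The derivatives are multiplied by `p` and `p²` so that all three limits are taken
relative to the same power `p ^ a`; differentiability is required separately because `deriv` is
`0` where it fails. -/
structure IsAsymptoticallyPolytropic (ρ : ℝ → ℝ) (K a : ℝ) : Prop where
  eventually_differentiableAt : ∀ᶠ p in 𝓝[>] 0, DifferentiableAt ℝ ρ p
  eventually_differentiableAt_deriv : ∀ᶠ p in 𝓝[>] 0, DifferentiableAt ℝ (deriv ρ) p
  tendsto_div : Tendsto (fun p => ρ p / p ^ a) (𝓝[>] 0) (𝓝 K)
  tendsto_deriv_div : Tendsto (fun p => p * deriv ρ p / p ^ a) (𝓝[>] 0) (𝓝 (a * K))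
  tendsto_deriv_deriv_div :
    Tendsto (fun p => p ^ 2 * deriv (deriv ρ) p / p ^ a) (𝓝[>] 0) (𝓝 (a * (a - 1) * K))

/-- The Beig–Simon criterion function multiplied by `s²`, as a function of the rescaled density
`u`, its rescaled first and second derivatives `v` and `w`, and the rescaled pressure `s`. -/
noncomputable def rescaledCriterion (u v w s : ℝ) : ℝ :=
  (1 / 5) * ((u + s) / (u + 3 * s) * v) ^ 2 + 2 * s * ((u + s) / (u + 3 * s) * v) +
    (u + s) * (2 * (v - u) * v * s / (u + 3 * s) ^ 2 + (u + s) / (u + 3 * s) * w)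

theorem tendsto_rescaledCriterion {α : Type*} {l : Filter α} {u v w s : α → ℝ} {u₀ v₀ w₀ : ℝ}
    (hu₀ : u₀ ≠ 0) (hu : Tendsto u l (𝓝 u₀)) (hv : Tendsto v l (𝓝 v₀))
    (hw : Tendsto w l (𝓝 w₀)) (hs : Tendsto s l (𝓝 0)) :
    Tendsto (fun x => rescaledCriterion (u x) (v x) (w x) (s x)) l
      (𝓝 ((1 / 5) * v₀ ^ 2 + u₀ * w₀)) := by
  have hnum : Tendsto (fun x => u x + s x) l (𝓝 u₀) := by simpa using hu.add hs
  have hden : Tendsto (fun x => u x + 3 * s x) l (𝓝 u₀) := by simpa using hu.add (hs.const_mul 3)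
  have hratio : Tendsto (fun x => (u x + s x) / (u x + 3 * s x)) l (𝓝 1) := by
    simpa [Pi.div_def, hu₀] using hnum.div hden hu₀
  have hkappa : Tendsto (fun x => (u x + s x) / (u x + 3 * s x) * v x) l (𝓝 v₀) := by
    simpa using hratio.mul hv
  have hcorrection : Tendsto
      (fun x => 2 * (v x - u x) * v x * s x / (u x + 3 * s x) ^ 2) l (𝓝 0) := by
    simpa [Pi.div_def] using
      ((((hv.sub hu).const_mul 2).mul hv).mul hs).div (hden.pow 2) (pow_ne_zero 2 hu₀)
  simpa [rescaledCriterion] using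
    (((hkappa.pow 2).const_mul (1 / 5 : ℝ)).add ((hs.const_mul 2).mul hkappa)).add
      (hnum.mul (hcorrection.add (hratio.mul hw)))

section Pointwise

variable {ρ : ℝ → ℝ} {p : ℝ}

theorem hasDerivAt_beigSimonKappa (hρ : DifferentiableAt ℝ ρ p)
    (hρ' : DifferentiableAt ℝ (deriv ρ) p) (hden : ρ p + 3 * p ≠ 0) :
    HasDerivAt (beigSimonKappa ρ)
      (2 * (p * deriv ρ p - ρ p) / (ρ p + 3 * p) ^ 2 * deriv ρ p +
        (ρ p + p) / (ρ p + 3 * p) * deriv (deriv ρ) p) p := by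
  have hnumDeriv : HasDerivAt (fun q => ρ q + q) (deriv ρ p + 1) p :=
    hρ.hasDerivAt.add (hasDerivAt_id p)
  have hdenDeriv : HasDerivAt (fun q => ρ q + 3 * q) (deriv ρ p + 3 * 1) p :=
    hρ.hasDerivAt.add ((hasDerivAt_id p).const_mul 3)
  exact ((hnumDeriv.fun_div hdenDeriv hden).fun_mul hρ'.hasDerivAt).congr_deriv (by ring)

theorem sq_mul_beigSimonCriterion {c : ℝ} (hρ : DifferentiableAt ℝ ρ p)
    (hρ' : DifferentiableAt ℝ (deriv ρ) p) (hden : ρ p + 3 * p ≠ 0) (hc : c ≠ 0) :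
    (p / c) ^ 2 * beigSimonCriterion ρ p =
      rescaledCriterion (ρ p / c) (p * deriv ρ p / c) (p ^ 2 * deriv (deriv ρ) p / c) (p / c) := by
  have hratio : (ρ p / c + p / c) / (ρ p / c + 3 * (p / c)) = (ρ p + p) / (ρ p + 3 * p) := by
    rw [← mul_div_assoc, ← add_div, ← add_div, div_div_div_cancel_right₀ hc]
  have hden_div : ρ p / c + 3 * (p / c) = (ρ p + 3 * p) / c := by ring
  rw [beigSimonCriterion, (hasDerivAt_beigSimonKappa hρ hρ' hden).deriv, beigSimonKappa,
    rescaledCriterion, hratio, hden_div]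
  field_simp

end Pointwise

theorem tendsto_self_div_rpow_nhdsGT_zero {a : ℝ} (ha : a < 1) :
    Tendsto (fun p : ℝ => p / p ^ a) (𝓝[>] 0) (𝓝 0) := by
  have hrpow : Tendsto (fun p : ℝ => p ^ (1 - a)) (𝓝[>] 0) (𝓝 0) := by
    have hcont := Real.continuousAt_rpow_const 0 (1 - a) (Or.inr (sub_pos.2 ha).le)
    simpa [Real.zero_rpow (sub_pos.2 ha).ne'] using hcont.tendsto.mono_left nhdsWithin_le_nhds
  refine hrpow.congr' ?_
  filter_upwards [self_mem_nhdsWithin] with p hp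
  rw [Real.rpow_sub hp, Real.rpow_one]

namespace IsAsymptoticallyPolytropic

variable {ρ : ℝ → ℝ} {K a : ℝ}

theorem eventually_add_three_mul_ne_zero (hρ : IsAsymptoticallyPolytropic ρ K a) (hK : K ≠ 0)
    (ha : a < 1) : ∀ᶠ p in 𝓝[>] 0, ρ p + 3 * p ≠ 0 := by
  have hlim : Tendsto (fun p => ρ p / p ^ a + 3 * (p / p ^ a)) (𝓝[>] 0) (𝓝 K) := by
    simpa using hρ.tendsto_div.add ((tendsto_self_div_rpow_nhdsGT_zero ha).const_mul 3)
  filter_upwards [hlim.eventually_ne hK] with p hp hzero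
  exact hp (by rw [← mul_div_assoc, ← add_div, hzero, zero_div])

theorem tendsto_rpow_mul_beigSimonCriterion (hρ : IsAsymptoticallyPolytropic ρ K a) (hK : K ≠ 0)
    (ha : a < 1) :
    Tendsto (fun p => p ^ (2 * (1 - a)) * beigSimonCriterion ρ p) (𝓝[>] 0)
      (𝓝 (a * (6 * a - 5) / 5 * K ^ 2)) := by
  have hlim := tendsto_rescaledCriterion hK hρ.tendsto_div hρ.tendsto_deriv_div
    hρ.tendsto_deriv_deriv_div (tendsto_self_div_rpow_nhdsGT_zero ha)
  have hvalue : a * (6 * a - 5) / 5 * K ^ 2 =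
      (1 / 5) * (a * K) ^ 2 + K * (a * (a - 1) * K) := by ring
  rw [hvalue]
  refine hlim.congr' ?_
  filter_upwards [hρ.eventually_differentiableAt, hρ.eventually_differentiableAt_deriv,
    hρ.eventually_add_three_mul_ne_zero hK ha, self_mem_nhdsWithin]
    with p hdiff hdiff' hden (hp : 0 < p)
  have hweight : p ^ (2 * (1 - a)) = (p / p ^ a) ^ 2 := by
    rw [mul_comm, Real.rpow_mul hp.le, Real.rpow_sub hp, Real.rpow_one, Real.rpow_two]
  rw [hweight, sq_mul_beigSimonCriterion hdiff hdiff' hden (Real.rpow_pos_of_pos hp a).ne']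

theorem eventually_beigSimonCriterion_neg (hρ : IsAsymptoticallyPolytropic ρ K a) (hK : K ≠ 0)
    (ha₀ : 0 < a) (ha : a < 5 / 6) : ∀ᶠ p in 𝓝[>] 0, beigSimonCriterion ρ p < 0 := by
  have hlimit_neg : a * (6 * a - 5) / 5 * K ^ 2 < 0 :=
    mul_neg_of_neg_of_pos (by nlinarith) (by positivity)
  have hlim := hρ.tendsto_rpow_mul_beigSimonCriterion hK (by linarith)
  filter_upwards [hlim.eventually_lt_const hlimit_neg, self_mem_nhdsWithin] with p hprod hp
  exact (pos_iff_neg_of_mul_neg hprod).1 (Real.rpow_pos_of_pos hp _)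

end IsAsymptoticallyPolytropic

theorem hasDerivAt_const_mul_rpow (K a : ℝ) {p : ℝ} (hp : 0 < p) :
    HasDerivAt (fun q : ℝ => K * q ^ a) (a * K * p ^ (a - 1)) p :=
  ((Real.hasDerivAt_rpow_const (Or.inl hp.ne')).const_mul K).congr_deriv (by ring)

theorem hasDerivAt_deriv_const_mul_rpow (K a : ℝ) {p : ℝ} (hp : 0 < p) :
    HasDerivAt (deriv fun q : ℝ => K * q ^ a) (a * (a - 1) * K * p ^ (a - 2)) p := by
  have hderiv : deriv (fun q : ℝ => K * q ^ a) =ᶠ[𝓝 p] fun q => a * K * q ^ (a - 1) := by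
    filter_upwards [lt_mem_nhds hp] with q hq using (hasDerivAt_const_mul_rpow K a hq).deriv
  exact ((hasDerivAt_const_mul_rpow (a * K) (a - 1) hp).congr_of_eventuallyEq hderiv).congr_deriv
    (by ring_nf)

theorem isAsymptoticallyPolytropic_const_mul_rpow (K a : ℝ) :
    IsAsymptoticallyPolytropic (fun p => K * p ^ a) K a where
  eventually_differentiableAt := by
    filter_upwards [self_mem_nhdsWithin] with p hp
      using (hasDerivAt_const_mul_rpow K a hp).differentiableAt
  eventually_differentiableAt_deriv := by
    filter_upwards [self_mem_nhdsWithin] with p hp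
      using (hasDerivAt_deriv_const_mul_rpow K a hp).differentiableAt
  tendsto_div := by
    refine tendsto_const_nhds.congr' ?_
    filter_upwards [self_mem_nhdsWithin] with p hp
    exact (mul_div_cancel_right₀ K (Real.rpow_pos_of_pos hp a).ne').symm
  tendsto_deriv_div := by
    refine tendsto_const_nhds.congr' ?_
    filter_upwards [self_mem_nhdsWithin] with p (hp : 0 < p)
    rw [(hasDerivAt_const_mul_rpow K a hp).deriv, Real.rpow_sub hp, Real.rpow_one]
    field_simp
  tendsto_deriv_deriv_div := by
    refine tendsto_const_nhds.congr' ?_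
    filter_upwards [self_mem_nhdsWithin] with p (hp : 0 < p)
    rw [(hasDerivAt_deriv_const_mul_rpow K a hp).deriv, Real.rpow_sub hp, Real.rpow_two]
    field_simp

theorem stmt_17_general {ρ : ℝ → ℝ} {K γ : ℝ} (hρ : IsAsymptoticallyPolytropic ρ K (1 / γ))
    (hK : K ≠ 0) (hγ : 1 < γ) :
    Tendsto (fun p => p ^ (2 * (γ - 1) / γ) * beigSimonCriterion ρ p) (𝓝[>] 0)
        (𝓝 (-(5 * γ - 6) * K ^ 2 / (5 * γ ^ 2))) ∧
      (6 / 5 < γ → ∀ᶠ p in 𝓝[>] 0, beigSimonCriterion ρ p < 0) := by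
  have hγ₀ : 0 < γ := by linarith
  have hexponent : 2 * (γ - 1) / γ = 2 * (1 - 1 / γ) := by field_simp
  have hlimit : -(5 * γ - 6) * K ^ 2 / (5 * γ ^ 2) =
      1 / γ * (6 * (1 / γ) - 5) / 5 * K ^ 2 := by field_simp; ring
  rw [hexponent, hlimit]
  refine ⟨hρ.tendsto_rpow_mul_beigSimonCriterion hK ((div_lt_one hγ₀).2 hγ), fun h65 => ?_⟩
  exact hρ.eventually_beigSimonCriterion_neg hK (one_div_pos.2 hγ₀)
    ((div_lt_iff₀ hγ₀).2 (by linarith))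

/-- For the polytropic equation of state `ρ(p) = K̃ p^{1/γ}` with `K̃ > 0`, `γ > 1`,
one has `p^{2(γ-1)/γ} I(p) → -(5γ-6)K̃²/(5γ²)` as `p → 0⁺`; in particular, if
`γ > 6/5` then `I(p) < 0` for all sufficiently small `p > 0`. -/
theorem stmt_17 (K γ : ℝ) (hK : 0 < K) (hγ : 1 < γ)
    (ρ κ I : ℝ → ℝ)
    (hρ : ∀ p, ρ p = K * p ^ (1 / γ))
    (hκ : ∀ p, κ p = ((ρ p + p) / (ρ p + 3 * p)) * deriv ρ p)
    (hI : ∀ p, I p = (1/5) * (κ p) ^ 2 + 2 * κ p + (ρ p + p) * deriv κ p) :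
    Tendsto (fun p => p ^ (2 * (γ - 1) / γ) * I p) (nhdsWithin 0 (Set.Ioi 0))
        (nhds (-(5 * γ - 6) * K ^ 2 / (5 * γ ^ 2))) ∧
      (6 / 5 < γ → ∀ᶠ p in nhdsWithin 0 (Set.Ioi 0), I p < 0) := by
  obtain rfl : κ = beigSimonKappa ρ := funext hκ
  obtain rfl : I = beigSimonCriterion ρ := funext hI
  obtain rfl : ρ = fun p => K * p ^ (1 / γ) := funext hρ
  exact stmt_17_general (isAsymptoticallyPolytropic_const_mul_rpow K (1 / γ)) hK.ne' hγ
end
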